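/- Let α ∈ (0,1). There exists a constant C > 0 (depending only on α) such that for every λ > 0 and every t > 0, λ E_α(−λ t^α) ≤ C t^(−α). -/

import Mathlib

/-- The Mittag-Leffler function `E_α(x) = ∑_{k=0}^∞ x^k / Γ(αk + 1)`. -/
noncomputable def mittagLeffler (α x : ℝ) : ℝ :=
  ∑' k : ℕ, x ^ k / Real.Gamma (α * k + 1)

open MeasureTheory intervalIntegral Set

lemma ker_int (α : ℝ) (hα : 0 < α) (T a b : ℝ) :
    IntervalIntegrable (fun s : ℝ => (T - s) ^ (α - 1)) volume a b := by
  have := (intervalIntegrable_rpow' (a := T - a) (b := T - b) (r := α - 1)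
    (by linarith)).comp_sub_left T
  simpa using this

lemma ker_mul_int (α : ℝ) (hα : 0 < α) (d : ℝ → ℝ) (hd : Continuous d) (T a b : ℝ) :
    IntervalIntegrable (fun s : ℝ => (T - s) ^ (α - 1) * d s) volume a b :=
  (ker_int α hα T a b).mul_continuousOn hd.continuousOn

lemma ker_integral (α : ℝ) (hα : 0 < α) (t T : ℝ) (h : t ≤ T) :
    ∫ s in t..T, (T - s) ^ (α - 1) = (T - t) ^ α / α := by
  rw [intervalIntegral.integral_comp_sub_left (fun x : ℝ => x ^ (α - 1)) T,
    integral_rpow (Or.inl (by linarith))]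
  simp [Real.zero_rpow hα.ne']

/-- shape of the kernel, upper version -/
lemma ker_le (α : ℝ) (hα1 : α < 1) (s t T : ℝ) (hs : 0 ≤ s) (hst : s < t)
    (htT : t ≤ T) : (T - s) ^ (α - 1) ≤ (t / T) ^ (1 - α) * (t - s) ^ (α - 1) := by
  have h1 : 0 < t - s := by linarith
  have h2 : 0 < T - s := by linarith
  have e : α - 1 = -(1 - α) := by ring
  rw [e, Real.rpow_neg h1.le, Real.rpow_neg h2.le, ← div_eq_mul_inv,
    le_div_iff₀ (by positivity), ← div_eq_inv_mul, ← Real.div_rpow h1.le h2.le]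
  apply Real.rpow_le_rpow (by positivity) _ (by linarith)
  rw [div_le_div_iff₀ h2 (by linarith)]
  nlinarith

lemma ker_ge (α : ℝ) (hα1 : α < 1) (a t T : ℝ) (ha : 0 ≤ a) (ht : 0 < t)
    (htT : t ≤ T) : (t / T) ^ (1 - α) * (t + a) ^ (α - 1) ≤ (T + a) ^ (α - 1) := by
  have h1 : 0 < t + a := by linarith
  have h2 : 0 < T + a := by linarith
  have hT : 0 < T := by linarith
  have e : α - 1 = -(1 - α) := by ring
  rw [e, Real.rpow_neg h1.le, Real.rpow_neg h2.le, ← div_eq_mul_inv,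
    div_le_iff₀ (by positivity), ← div_eq_inv_mul, ← Real.div_rpow h1.le h2.le]
  apply Real.rpow_le_rpow (by positivity) _ (by linarith)
  rw [div_le_div_iff₀ hT h2]
  nlinarith

lemma volterra_pos (α : ℝ) (hα : 0 < α) (hα1 : α < 1) (c : ℝ) (hc : 0 < c) (d g : ℝ → ℝ)
    (hd : Continuous d) (h0 : 0 < d 0)
    (heq : ∀ t, 0 ≤ t → d t = g t - c * ∫ s in (0:ℝ)..t, (t - s) ^ (α - 1) * d s)
    (hg : ∀ t T, 0 < t → t ≤ T → (t / T) ^ (1 - α) * g t ≤ g T) :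
    ∀ t, 0 ≤ t → 0 < d t := by
  by_contra! hcon
  obtain ⟨T1, hT1, hdT1⟩ := hcon
  let S : Set ℝ := {t | 0 ≤ t ∧ d t ≤ 0}
  have hSc : IsClosed S :=
    (isClosed_le continuous_const continuous_id).inter (isClosed_le hd continuous_const)
  have hSn : S.Nonempty := ⟨T1, hT1, hdT1⟩
  have hSb : BddBelow S := ⟨0, fun x hx => hx.1⟩
  obtain ⟨T, hT⟩ : ∃ T, T = sInf S := ⟨_, rfl⟩
  have hTS : T ∈ S := hT ▸ hSc.csInf_mem hSn hSb
  have hpos : ∀ t, 0 ≤ t → t < T → 0 < d t := by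
    intro t ht htT
    by_contra! hn
    have : T ≤ t := hT ▸ csInf_le hSb ⟨ht, hn⟩
    linarith
  have hTpos : 0 < T := by
    rcases hTS.1.lt_or_eq with h | h
    · exact h
    · have := hTS.2
      rw [← h] at this; linarith
  -- small parameter
  obtain ⟨ε, hε, hεs⟩ : ∃ ε : ℝ, 0 < ε ∧ c * (ε ^ α / α) < 1 / 2 := by
    have hcont : Filter.Tendsto (fun ε : ℝ => c * (ε ^ α / α)) (nhdsWithin 0 (Ioi 0))
        (nhds (c * ((0:ℝ) ^ α / α))) := by
      apply Filter.Tendsto.mono_left _ nhdsWithin_le_nhds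
      exact ((((Real.continuous_rpow_const hα.le).div_const α).const_mul c).tendsto 0)
    rw [Real.zero_rpow hα.ne'] at hcont
    have h1 := hcont.eventually (gt_mem_nhds (show c * (0 / α) < 1 / 2 by simp))
    obtain ⟨ε, h, h'⟩ := (h1.and self_mem_nhdsWithin).exists
    exact ⟨ε, h', h⟩
  obtain ⟨a, ha⟩ : ∃ a, a = max (T - ε) (T / 2) := ⟨_, rfl⟩
  have ha1 : T - ε ≤ a := ha ▸ le_max_left _ _
  have ha2 : T / 2 ≤ a := ha ▸ le_max_right _ _
  have haT : a < T := by rw [ha]; exact max_lt (by linarith) (by linarith)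
  obtain ⟨t, ⟨hat, htT'⟩, hmax⟩ := isCompact_Icc.exists_isMaxOn (nonempty_Icc.2 haT.le)
    (hd.continuousOn (s := Icc a T))
  have hmax' : ∀ s, a ≤ s → s ≤ T → d s ≤ d t := fun s h1 h2 => hmax ⟨h1, h2⟩
  have hdt : 0 < d t := (hpos a (by linarith) haT).trans_le (hmax' a le_rfl haT.le)
  have htT : t < T := by
    rcases htT'.lt_or_eq with h | h
    · exact h
    · have := hTS.2
      rw [← h] at this; linarith
  have ht0 : 0 < t := by linarith
  obtain ⟨ρ, hρ⟩ : ∃ ρ, ρ = (t / T) ^ (1 - α) := ⟨_, rfl⟩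
  have hρ2 : 1 / 2 ≤ ρ := by
    have h1 : t / T ≤ ρ := by
      rw [hρ]
      apply Real.self_le_rpow_of_le_one (by positivity) ((div_le_one hTpos).2 htT') (by linarith)
    have : 1 / 2 ≤ t / T := by rw [div_le_div_iff₀ (by norm_num) hTpos]; linarith
    linarith
  have I1 : ∫ s in (0:ℝ)..t, (T - s) ^ (α - 1) * d s
      ≤ ρ * ∫ s in (0:ℝ)..t, (t - s) ^ (α - 1) * d s := by
    rw [← intervalIntegral.integral_const_mul]
    apply integral_mono_on_of_le_Ioo ht0.le (ker_mul_int α hα d hd T 0 t)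
      ((ker_mul_int α hα d hd t 0 t).const_mul ρ)
    intro s hs
    rw [← mul_assoc]
    apply mul_le_mul_of_nonneg_right _ (hpos s hs.1.le (hs.2.trans htT)).le
    rw [hρ]
    exact ker_le α hα1 s t T hs.1.le hs.2 htT'
  have I2 : ∫ s in t..T, (T - s) ^ (α - 1) * d s ≤ (ε ^ α / α) * d t := by
    have : ∫ s in t..T, (T - s) ^ (α - 1) * d s ≤ ∫ s in t..T, (T - s) ^ (α - 1) * d t := by
      apply integral_mono_on htT' (ker_mul_int α hα d hd T t T)
        ((ker_int α hα T t T).mul_const _)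
      intro s hs
      apply mul_le_mul_of_nonneg_left (hmax' s (hat.trans hs.1) hs.2)
      exact Real.rpow_nonneg (by linarith [hs.2]) _
    rw [intervalIntegral.integral_mul_const, ker_integral α hα t T htT'] at this
    refine this.trans ?_
    apply mul_le_mul_of_nonneg_right _ hdt.le
    apply div_le_div_of_nonneg_right _ hα.le
    exact Real.rpow_le_rpow (by linarith) (by linarith) hα.le
  have hsplit := integral_add_adjacent_intervals (ker_mul_int α hα d hd T 0 t)
    (ker_mul_int α hα d hd T t T)
  have e1 := heq T hTpos.le
  have e2 := heq t ht0.le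
  have e3 := hg t T ht0 htT'
  rw [← hρ] at e3
  rw [← hsplit] at e1
  have e4 := hTS.2
  have J1 := mul_le_mul_of_nonneg_left I1 hc.le
  have J2 := mul_le_mul_of_nonneg_left I2 hc.le
  have J3 : c * (ε ^ α / α) * d t < 1 / 2 * d t := mul_lt_mul_of_pos_right hεs hdt
  have J4 : 1 / 2 * d t ≤ ρ * d t := mul_le_mul_of_nonneg_right hρ2 hdt.le
  have e5 : ρ * d t = ρ * g t - c * (ρ * ∫ s in (0:ℝ)..t, (t - s) ^ (α - 1) * d s) := by
    rw [e2]; ring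
  linarith

/-- decay from the Volterra equation -/
lemma volterra_decay (α : ℝ) (hα : 0 < α) (hα1 : α < 1) (c : ℝ) (hc : 0 < c) (u : ℝ → ℝ)
    (hu : Continuous u)
    (heq : ∀ t, 0 ≤ t → u t = 1 - c * ∫ s in (0:ℝ)..t, (t - s) ^ (α - 1) * u s) :
    ∀ t, 0 < t → t ^ α * u t ≤ α / c := by
  have hu0 : u 0 = 1 := by simpa using heq 0 le_rfl
  have hpos : ∀ t, 0 ≤ t → 0 < u t := by
    apply volterra_pos α hα hα1 c hc u (fun _ => 1) hu (by simp [hu0]) heq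
    intro t T ht hT
    rw [mul_one]
    exact Real.rpow_le_one (div_nonneg ht.le (ht.le.trans hT)) ((div_le_one (by linarith)).2 hT) (by linarith)
  have hanti : ∀ h, 0 < h → ∀ t, 0 ≤ t → u (t + h) < u t := by
    intro h hh t ht
    have key := volterra_pos α hα hα1 c hc (fun t => u t - u (t + h))
      (fun t => c * ∫ s in (0:ℝ)..h, (t + h - s) ^ (α - 1) * u s)
      (by fun_prop) ?_ ?_ ?_ t ht
    · simpa using key
    · have e := heq h hh.le
      have : 0 < ∫ s in (0:ℝ)..h, (h - s) ^ (α - 1) * u s := by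
        apply intervalIntegral_pos_of_pos_on (ker_mul_int α hα u hu h 0 h) _ hh
        intro s hs
        exact mul_pos (Real.rpow_pos_of_pos (by linarith [hs.2]) _) (hpos s hs.1.le)
      have := mul_pos hc this
      simp only [zero_add, hu0]
      linarith
    · intro t ht
      have e1 := heq t ht
      have e2 := heq (t + h) (by linarith)
      have hsplit := integral_add_adjacent_intervals (ker_mul_int α hα u hu (t + h) 0 h)
        (ker_mul_int α hα u hu (t + h) h (t + h))
      have hsub := intervalIntegral.integral_comp_add_right (a := 0) (b := t)
        (fun s => (t + h - s) ^ (α - 1) * u s) h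
      simp only [zero_add, add_sub_add_right_eq_sub] at hsub
      have hs2 : ∫ s in (0:ℝ)..t, (t - s) ^ (α - 1) * (u s - u (s + h))
          = (∫ s in (0:ℝ)..t, (t - s) ^ (α - 1) * u s)
            - ∫ s in (0:ℝ)..t, (t - s) ^ (α - 1) * u (s + h) := by
        rw [← intervalIntegral.integral_sub (ker_mul_int α hα u hu t 0 t)
          (ker_mul_int α hα (fun s => u (s + h)) (by fun_prop) t 0 t)]
        simp only [mul_sub]
      simp only [hs2]
      rw [e1, e2, ← hsplit, hsub]
      ring
    · intro t T ht htT
      rw [mul_left_comm, ← intervalIntegral.integral_const_mul]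
      apply mul_le_mul_of_nonneg_left _ hc.le
      apply integral_mono_on hh.le ((ker_mul_int α hα u hu _ 0 h).const_mul _)
        (ker_mul_int α hα u hu _ 0 h)
      intro s hs
      rw [← mul_assoc]
      apply mul_le_mul_of_nonneg_right _ (hpos s hs.1).le
      have := ker_ge α hα1 (h - s) t T (by linarith [hs.2]) ht htT
      simpa only [add_sub_assoc] using this
  intro t ht
  have e := heq t ht.le
  have I : ∫ s in (0:ℝ)..t, (t - s) ^ (α - 1) * u t ≤
      ∫ s in (0:ℝ)..t, (t - s) ^ (α - 1) * u s := by
    apply integral_mono_on ht.le ((ker_int α hα t 0 t).mul_const _) (ker_mul_int α hα u hu t 0 t)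
    intro s hs
    apply mul_le_mul_of_nonneg_left _ (Real.rpow_nonneg (by linarith [hs.2]) _)
    rcases hs.2.lt_or_eq with h | h
    · have := hanti (t - s) (by linarith) s hs.1
      simp only [add_sub_cancel] at this
      exact this.le
    · rw [h]
  rw [intervalIntegral.integral_mul_const, ker_integral α hα 0 t ht.le, sub_zero] at I
  have J := mul_le_mul_of_nonneg_left I hc.le
  have hp := hpos t ht.le
  rw [le_div_iff₀ hc]
  have : c * (t ^ α / α * u t) ≤ 1 := by linarith
  have e2 : c * (t ^ α / α * u t) = (t ^ α * u t * c) / α := by ring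
  rw [e2, div_le_one hα] at this
  exact this

lemma gamma_lower (R s : ℝ) (hR : 0 < R) (hs : 1 ≤ s) :
    Real.exp (-R) * R ^ (s - 1) ≤ Real.Gamma s := by
  rw [Real.Gamma_eq_integral (by linarith)]
  have hint := Real.GammaIntegral_convergent (s := s) (by linarith)
  have h1 : ∫ x in Ioi R, Real.exp (-x) * R ^ (s - 1)
      ≤ ∫ x in Ioi R, Real.exp (-x) * x ^ (s - 1) := by
    apply setIntegral_mono_on _ (hint.mono_set (Ioi_subset_Ioi hR.le)) measurableSet_Ioi
    · intro x hx
      apply mul_le_mul_of_nonneg_left _ (Real.exp_pos _).le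
      exact Real.rpow_le_rpow hR.le (le_of_lt hx) (by linarith)
    · exact (integrableOn_exp_neg_Ioi R).mul_const _
  have h2 : ∫ x in Ioi R, Real.exp (-x) * x ^ (s - 1)
      ≤ ∫ x in Ioi 0, Real.exp (-x) * x ^ (s - 1) := by
    apply setIntegral_mono_set hint
    · refine (ae_restrict_iff' measurableSet_Ioi).2 (Filter.Eventually.of_forall ?_)
      intro x hx
      exact mul_nonneg (Real.exp_pos _).le (Real.rpow_nonneg (le_of_lt hx) _)
    · exact (Ioi_subset_Ioi hR.le).eventuallyLE
  rw [MeasureTheory.integral_mul_const, integral_exp_neg_Ioi] at h1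
  exact h1.trans h2

lemma ml_summable (α : ℝ) (hα : 0 < α) (x : ℝ) (hx : 0 ≤ x) :
    Summable (fun k : ℕ => x ^ k / Real.Gamma (α * k + 1)) := by
  obtain ⟨R, hR⟩ : ∃ R, R = (2 * x + 1) ^ (1 / α) := ⟨_, rfl⟩
  have hRp : 0 < R := by rw [hR]; positivity
  have hRα : R ^ α = 2 * x + 1 := by
    rw [hR, ← Real.rpow_mul (by positivity), one_div_mul_cancel hα.ne', Real.rpow_one]
  apply Summable.of_nonneg_of_le (f := fun k : ℕ => Real.exp R * (1 / 2) ^ k)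
  · intro k
    have : 0 < Real.Gamma (α * k + 1) := Real.Gamma_pos_of_pos (by positivity)
    positivity
  · intro k
    have hG : 0 < Real.Gamma (α * k + 1) := Real.Gamma_pos_of_pos (by positivity)
    have h := gamma_lower R (α * k + 1) hRp (by
      have : 0 ≤ α * k := by positivity
      linarith)
    rw [add_sub_cancel_right, Real.rpow_mul hRp.le, hRα, Real.rpow_natCast] at h
    rw [div_le_iff₀ hG]
    have h3 : x ^ k ≤ (1 / 2) ^ k * (2 * x + 1) ^ k := by
      rw [← mul_pow]
      exact pow_le_pow_left₀ hx (by linarith) k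
    calc x ^ k ≤ (1 / 2) ^ k * (2 * x + 1) ^ k := h3
      _ = Real.exp R * (1 / 2) ^ k * (Real.exp (-R) * (2 * x + 1) ^ k) := by
        rw [Real.exp_neg]; field_simp
      _ ≤ _ := mul_le_mul_of_nonneg_left h (by positivity)
  · exact (summable_geometric_of_lt_one (by norm_num) (by norm_num)).mul_left _

lemma ml_term_bound (α : ℝ) (hα : 0 < α) (x M : ℝ) (hx : |x| ≤ M) (k : ℕ) :
    ‖x ^ k / Real.Gamma (α * k + 1)‖ ≤ M ^ k / Real.Gamma (α * k + 1) := by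
  have hG : 0 < Real.Gamma (α * k + 1) := Real.Gamma_pos_of_pos (by positivity)
  rw [norm_div, norm_pow, Real.norm_eq_abs, Real.norm_eq_abs, abs_of_pos hG]
  gcongr

lemma ml_continuous (α : ℝ) (hα : 0 < α) : Continuous (mittagLeffler α) := by
  rw [continuous_iff_continuousAt]
  intro x
  have hc : ContinuousOn (mittagLeffler α) (Icc (-(|x| + 1)) (|x| + 1)) := by
    apply continuousOn_tsum (fun k => by fun_prop) (ml_summable α hα (|x| + 1) (by positivity))
    intro k y hy
    exact ml_term_bound α hα y _ (abs_le.2 hy) k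
  apply hc.continuousAt
  apply Icc_mem_nhds
  · linarith [neg_abs_le x]
  · linarith [le_abs_self x]

lemma beta_scaled (α b t : ℝ) (hα : 0 < α) (hb : 0 < b) (ht : 0 < t) :
    ∫ s in (0:ℝ)..t, (t - s) ^ (α - 1) * s ^ (b - 1)
      = t ^ (b + α - 1) * (Real.Gamma b * Real.Gamma α / Real.Gamma (b + α)) := by
  have h := Complex.betaIntegral_scaled b α ht
  rw [Complex.betaIntegral_eq_Gamma_mul_div _ _ (by simpa) (by simpa)] at h
  apply Complex.ofReal_injective
  rw [← intervalIntegral.integral_ofReal]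
  have e : ∫ s in (0:ℝ)..t, (((t - s) ^ (α - 1) * s ^ (b - 1) : ℝ) : ℂ)
      = ∫ x in (0:ℝ)..t, (x : ℂ) ^ ((b:ℂ) - 1) * ((t : ℂ) - x) ^ ((α:ℂ) - 1) := by
    apply intervalIntegral.integral_congr
    intro s hs
    rw [uIcc_of_le ht.le] at hs
    simp only
    rw [Complex.ofReal_mul, Complex.ofReal_cpow (by linarith [hs.2]),
      Complex.ofReal_cpow hs.1]
    push_cast
    ring
  rw [e, h, Complex.ofReal_mul, Complex.ofReal_cpow ht.le]
  push_cast
  rw [← Complex.Gamma_ofReal, ← Complex.Gamma_ofReal, ← Complex.Gamma_ofReal]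
  push_cast
  rfl

lemma ml_volterra (α : ℝ) (hα : 0 < α) (t : ℝ) (ht : 0 ≤ t) :
    mittagLeffler α (-t ^ α) = 1 - (1 / Real.Gamma α) *
      ∫ s in (0:ℝ)..t, (t - s) ^ (α - 1) * mittagLeffler α (-s ^ α) := by
  rcases ht.lt_or_eq with ht | rfl
  swap
  · rw [integral_same, Real.zero_rpow hα.ne', neg_zero, mittagLeffler,
      tsum_eq_single 0 (fun k hk => by simp [hk])]
    simp
  have hsum := ml_summable α hα (t ^ α) (by positivity)
  have hsumE : ∀ x, Summable (fun k : ℕ => x ^ k / Real.Gamma (α * k + 1)) := fun x =>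
    Summable.of_norm_bounded (ml_summable α hα |x| (abs_nonneg x))
      (ml_term_bound α hα x _ le_rfl)
  have hGα : 0 < Real.Gamma α := Real.Gamma_pos_of_pos hα
  have hS : HasSum (fun k : ℕ => ∫ s in (0:ℝ)..t,
      (t - s) ^ (α - 1) * ((-s ^ α) ^ k / Real.Gamma (α * k + 1)))
      (∫ s in (0:ℝ)..t, (t - s) ^ (α - 1) * mittagLeffler α (-s ^ α)) := by
    apply intervalIntegral.hasSum_integral_of_dominated_convergence
      (fun (k : ℕ) (s : ℝ) => (t - s) ^ (α - 1) * ((t ^ α) ^ k / Real.Gamma (α * k + 1)))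
    · intro k
      have hc : Continuous (fun s : ℝ => (-s ^ α) ^ k / Real.Gamma (α * k + 1)) := by
        have := Real.continuous_rpow_const hα.le
        fun_prop
      have := (ker_mul_int α hα _ hc t 0 t).aestronglyMeasurable
      rwa [uIoc_of_le ht.le]
    · intro k
      refine Filter.Eventually.of_forall fun s hs => ?_
      rw [uIoc_of_le ht.le] at hs
      have h1 : 0 ≤ (t - s) ^ (α - 1) := Real.rpow_nonneg (by linarith [hs.2]) _
      rw [norm_mul, Real.norm_of_nonneg h1]
      apply mul_le_mul_of_nonneg_left _ h1
      apply ml_term_bound α hα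
      rw [abs_neg, abs_of_nonneg (Real.rpow_nonneg hs.1.le _)]
      exact Real.rpow_le_rpow hs.1.le hs.2 hα.le
    · exact Filter.Eventually.of_forall fun s hs => hsum.mul_left _
    · simp only [tsum_mul_left]
      exact (ker_int α hα t 0 t).mul_const _
    · exact Filter.Eventually.of_forall fun s hs => (hsumE _).hasSum.mul_left _
  have hterm : ∀ k : ℕ, ∫ s in (0:ℝ)..t,
      (t - s) ^ (α - 1) * ((-s ^ α) ^ k / Real.Gamma (α * k + 1))
      = -Real.Gamma α * ((-t ^ α) ^ (k + 1) / Real.Gamma (α * ((k + 1 : ℕ) : ℝ) + 1)) := by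
    intro k
    have hG : 0 < Real.Gamma (α * k + 1) := Real.Gamma_pos_of_pos (by positivity)
    have hb := beta_scaled α (α * k + 1) t hα (by positivity) ht
    have e : ∫ s in (0:ℝ)..t, (t - s) ^ (α - 1) * ((-s ^ α) ^ k / Real.Gamma (α * k + 1))
        = ∫ s in (0:ℝ)..t, ((-1) ^ k / Real.Gamma (α * k + 1)) *
          ((t - s) ^ (α - 1) * s ^ (α * k + 1 - 1)) := by
      apply intervalIntegral.integral_congr
      intro s hs
      rw [uIcc_of_le ht.le] at hs
      simp only
      rw [add_sub_cancel_right, Real.rpow_mul hs.1, Real.rpow_natCast, neg_pow (s ^ α)]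
      ring
    rw [e, intervalIntegral.integral_const_mul, hb]
    have e2 : α * k + 1 + α = α * ((k + 1 : ℕ) : ℝ) + 1 := by push_cast; ring
    rw [e2, add_sub_cancel_right, Real.rpow_mul ht.le, Real.rpow_natCast, neg_pow (t ^ α),
      pow_succ (-1 : ℝ)]
    field_simp
  have hI := hS.tsum_eq
  simp only [hterm, tsum_mul_left] at hI
  rw [← hI]
  conv_lhs => rw [mittagLeffler, (hsumE _).tsum_eq_zero_add]
  simp only [pow_zero, Nat.cast_zero, mul_zero, zero_add, Real.Gamma_one]
  field_simp
  ring

theorem lambda_mul_mittagLeffler_bound (α : ℝ) (hα : α ∈ Set.Ioo (0:ℝ) 1) :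
    ∃ C : ℝ, 0 < C ∧ ∀ lam : ℝ, 0 < lam → ∀ t : ℝ, 0 < t →
      lam * mittagLeffler α (-lam * t ^ α) ≤ C * t ^ (-α) := by
  obtain ⟨h0, h1⟩ := hα
  have hG : 0 < Real.Gamma α := Real.Gamma_pos_of_pos h0
  have hc : 0 < 1 / Real.Gamma α := by positivity
  refine ⟨α / (1 / Real.Gamma α), by positivity, fun lam hl t ht => ?_⟩
  have hu : Continuous (fun t : ℝ => mittagLeffler α (-t ^ α)) :=
    (ml_continuous α h0).comp (Real.continuous_rpow_const h0.le).neg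
  have key := volterra_decay α h0 h1 _ hc _ hu (fun t ht => ml_volterra α h0 t ht)
    (lam ^ (1 / α) * t) (by positivity)
  have e : (lam ^ (1 / α) * t) ^ α = lam * t ^ α := by
    rw [Real.mul_rpow (by positivity) ht.le, ← Real.rpow_mul hl.le,
      one_div_mul_cancel h0.ne', Real.rpow_one]
  simp only [e] at key
  have htα : 0 < t ^ α := by positivity
  rw [Real.rpow_neg ht.le, ← div_eq_mul_inv, le_div_iff₀ htα, neg_mul]
  linarith
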